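/- Let Γ be a connected non-bipartite graph. If the complement graph Γ^c has two vertices at distance at least 3 (that is, diam(Γ^c) ≥ 3, allowing infinite distance), then depth R/I^3 = 0, i.e., the maximal graded ideal m is an associated prime of R/I^3. -/

import Mathlib

open MvPolynomial

noncomputable section

/-- The edge ideal of a graph `Γ` on vertex set `σ`, in `k[x_i : i ∈ σ]`. -/
def edgeIdeal (k : Type) [Field k] {σ : Type} (Γ : SimpleGraph σ) :
    Ideal (MvPolynomial σ k) :=
  Ideal.span { m | ∃ i j : σ, Γ.Adj i j ∧ m = X i * X j }

/-- The maximal graded ideal `(x_i : i ∈ σ)` of `k[x_i : i ∈ σ]`. -/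
def maxIdeal (k : Type) [Field k] (σ : Type) : Ideal (MvPolynomial σ k) :=
  Ideal.span (Set.range (X : σ → MvPolynomial σ k))

/-- `depth R/J = 0`, i.e. the maximal graded ideal is an associated prime of `R/J`. -/
def DepthZero (k : Type) [Field k] {σ : Type} (J : Ideal (MvPolynomial σ k)) : Prop :=
  maxIdeal k σ ∈ associatedPrimes (MvPolynomial σ k) (MvPolynomial σ k ⧸ J)

/-- The `i`-th local cohomology of `R/J` with support in the maximal graded ideal. -/
def locCoh (k : Type) [Field k] {σ : Type} (J : Ideal (MvPolynomial σ k)) (i : ℕ) :=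
  (localCohomology (maxIdeal k σ) i).obj (ModuleCat.of _ (MvPolynomial σ k ⧸ J))

/-- `depth R/J`, defined as the least `i` with `H^i_m(R/J) ≠ 0`. -/
def rDepth (k : Type) [Field k] {σ : Type} (J : Ideal (MvPolynomial σ k)) : ℕ :=
  sInf { i | Nontrivial (locCoh k J i) }

/-- A set `U` of vertices is dominating: every vertex outside `U` is adjacent to a
vertex of `U`. -/
def Dominating {σ : Type} (Γ : SimpleGraph σ) (U : Set σ) : Prop :=
  ∀ v ∉ U, ∃ u ∈ U, Γ.Adj u v

/-- The closed neighborhood `N[v]` of a vertex. -/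
def closedNbhd {σ : Type} (Γ : SimpleGraph σ) (v : σ) : Set σ :=
  insert v { u | Γ.Adj v u }

/-- The closed neighborhood `N[C]` of a set of vertices. -/
def closedNbhdSet {σ : Type} (Γ : SimpleGraph σ) (C : Set σ) : Set σ :=
  ⋃ v ∈ C, closedNbhd Γ v

/-- An odd cycle of length `m` (given as an injective map `ZMod m → σ` with consecutive
vertices adjacent) in `Γ`. -/
def IsOddCycle {σ : Type} (Γ : SimpleGraph σ) (m : ℕ) (c : ZMod m → σ) : Prop :=
  Odd m ∧ 3 ≤ m ∧ Function.Injective c ∧ ∀ i, Γ.Adj (c i) (c (i + 1))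

/-- `F` is an independent set of `Γ`. -/
def IsIndep {σ : Type} [Fintype σ] [DecidableEq σ] (Γ : SimpleGraph σ) (F : Finset σ) : Prop :=
  ∀ i ∈ F, ∀ j ∈ F, ¬ Γ.Adj i j

/-- `F` is a maximal independent set of `Γ`. -/
def IsMaxIndep {σ : Type} [Fintype σ] [DecidableEq σ] (Γ : SimpleGraph σ) (F : Finset σ) : Prop :=
  IsIndep Γ F ∧ ∀ G : Finset σ, IsIndep Γ G → F ⊆ G → G = F

/-- The prime ideal `P_F = (x_i : i ∉ F)`. -/
def PF (k : Type) [Field k] {σ : Type} [Fintype σ] [DecidableEq σ] (F : Finset σ) :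
    Ideal (MvPolynomial σ k) :=
  Ideal.span { m | ∃ i ∉ F, m = X i }

/-- The `t`-th symbolic power `I^{(t)} = ⋂_{F maximal independent} P_F^t` of the edge ideal. -/
def symbPow (k : Type) [Field k] {σ : Type} [Fintype σ] [DecidableEq σ]
    (Γ : SimpleGraph σ) (t : ℕ) : Ideal (MvPolynomial σ k) :=
  ⨅ F ∈ { F : Finset σ | IsMaxIndep Γ F }, PF k F ^ t

/-- The monomial `x^a`. -/
def xPow (k : Type) [Field k] {σ : Type} [Fintype σ] (a : σ → ℕ) : MvPolynomial σ k :=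
  ∏ i, X i ^ a i

/-- The localization `R[x_i^{-1} : i ∈ F]`. -/
abbrev locAt (k : Type) [Field k] {σ : Type} (F : Finset σ) :=
  Localization (Submonoid.closure ((fun i => (X i : MvPolynomial σ k)) '' (F : Set σ)))

/-- The degree complex `Δ_a(J) = {F : x^a ∉ J·R[x_i^{-1} : i ∈ F]}` of a monomial ideal `J`. -/
def degComplex (k : Type) [Field k] {σ : Type} [Fintype σ] (J : Ideal (MvPolynomial σ k))
    (a : σ → ℕ) : Set (Finset σ) :=
  { F | algebraMap (MvPolynomial σ k) (locAt k F) (xPow k a) ∉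
      J.map (algebraMap (MvPolynomial σ k) (locAt k F)) }

/-- `F` is a facet (maximal face) of the complex `Δ`. -/
def IsFacet {σ : Type} (Δ : Set (Finset σ)) (F : Finset σ) : Prop :=
  F ∈ Δ ∧ ∀ G ∈ Δ, F ⊆ G → G = F

/-- The complex `Δ` is disconnected: its vertex set splits into two nonempty parts such that
no face meets both. -/
def ComplexDisconnected {σ : Type} (Δ : Set (Finset σ)) : Prop :=
  ∃ A B : Set σ, A.Nonempty ∧ B.Nonempty ∧ Disjoint A B ∧
    (∀ i, {i} ∈ Δ ↔ i ∈ A ∪ B) ∧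
    ∀ F ∈ Δ, ¬ ((∃ i ∈ F, i ∈ A) ∧ (∃ j ∈ F, j ∈ B))

/-- The polynomial ring `R_v = k[x_i : i ≠ v]`. -/
abbrev Rv (k : Type) [Field k] {σ : Type} (v : σ) := MvPolynomial { i : σ // i ≠ v } k

/-- The localization `R[x_v^{-1}]`. -/
abbrev LocAway (k : Type) [Field k] {σ : Type} (v : σ) :=
  Localization.Away (X v : MvPolynomial σ k)

/-- For an ideal `I` of `R`, the ideal `I_v = I·R[x_v^{-1}] ∩ R_v` of `R_v`. -/
def idealV (k : Type) [Field k] {σ : Type} (I : Ideal (MvPolynomial σ k)) (v : σ) :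
    Ideal (Rv k v) :=
  Ideal.comap ((algebraMap (MvPolynomial σ k) (LocAway k v)).comp
      (MvPolynomial.rename (Subtype.val : { i : σ // i ≠ v } → σ)).toRingHom)
    (I.map (algebraMap (MvPolynomial σ k) (LocAway k v)))

/-- The edge ideal of the induced subgraph `Γ_U` in `k[x_i : i ∈ U]`. -/
def edgeIdealOn (k : Type) [Field k] {σ : Type} (Γ : SimpleGraph σ) (U : Set σ) :
    Ideal (MvPolynomial U k) :=
  Ideal.span { m | ∃ i j : U, Γ.Adj (i : σ) (j : σ) ∧ m = X i * X j }

/-- `Γ` has no isolated vertices. -/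
def NoIsolated {σ : Type} (Γ : SimpleGraph σ) : Prop :=
  ∀ v : σ, ∃ u : σ, Γ.Adj v u

/-!
Two vertices `u, v` are at distance at least 3 in `Γᶜ` exactly when every vertex of `Γ` is adjacent
to `u` or to `v`; taking the vertex `u` itself shows that `uv` is an edge. Were both neighbourhoods
independent, they would 2-colour `Γ`, so one of the two vertices, say `u`, lies on a triangle
`u a b`. Then `f = x_u² x_v x_a x_b` spans a copy of `R/m` in `R/I³`: it has degree 5 < 6, and
`x_w f` factors into three edges as `(uw)(uv)(ab)` if `w` is adjacent to `u` and as `(vw)(ua)(ub)`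
if `w` is adjacent to `v`.
-/

section DominatingEdge

variable {V : Type*} {Γ : SimpleGraph V} {u v : V}

theorem two_lt_compl_edist_iff_forall_adj_or_adj :
    2 < Γᶜ.edist u v ↔ ∀ w, Γ.Adj u w ∨ Γ.Adj v w := by
  simp only [SimpleGraph.two_lt_edist_iff, SimpleGraph.compl_adj, Set.eq_empty_iff_forall_notMem,
    SimpleGraph.mem_commonNeighbors]
  grind [SimpleGraph.Adj.symm, SimpleGraph.irrefl]

theorem adj_of_forall_adj_or_adj (hdom : ∀ w, Γ.Adj u w ∨ Γ.Adj v w) : Γ.Adj u v :=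
  ((hdom u).resolve_left Γ.irrefl).symm

theorem exists_triangle_of_not_colorable_two (hdom : ∀ w, Γ.Adj u w ∨ Γ.Adj v w)
    (hnb : ¬ Γ.Colorable 2) :
    (∃ a b, Γ.Adj u a ∧ Γ.Adj u b ∧ Γ.Adj a b) ∨ ∃ a b, Γ.Adj v a ∧ Γ.Adj v b ∧ Γ.Adj a b := by
  by_contra! ⟨hu, hv⟩
  have bipartition : Γ.IsBipartiteWith (Γ.neighborSet u) (Γ.neighborSet u)ᶜ :=
    { disjoint := disjoint_compl_right
      mem_of_adj := fun a b hab => by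
        simp only [Set.mem_compl_iff, SimpleGraph.mem_neighborSet]
        grind }
  exact hnb bipartition.isBipartite

end DominatingEdge

section Socle

theorem mem_associatedPrimes_quotient_of_mul_mem {R : Type*} [CommRing R] {m J : Ideal R}
    (hm : m.IsMaximal) {f : R} (hf : f ∉ J) (hmul : ∀ r ∈ m, r * f ∈ J) :
    m ∈ associatedPrimes R (R ⧸ J) := by
  have mem_colon_iff (r : R) :
      r ∈ (⊥ : Submodule R (R ⧸ J)).colon {Ideal.Quotient.mk J f} ↔ r * f ∈ J := by
    rw [Submodule.mem_colon_singleton, Submodule.mem_bot, ← Ideal.Quotient.eq_zero_iff_mem]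
    rfl
  have hcolon : m = (⊥ : Submodule R (R ⧸ J)).colon {Ideal.Quotient.mk J f} := by
    refine hm.eq_of_le ?_ fun r hr => (mem_colon_iff r).2 (hmul r hr)
    rwa [Ne, Ideal.eq_top_iff_one, mem_colon_iff, one_mul]
  exact ⟨hm.isPrime, Ideal.Quotient.mk J f, by rw [← hcolon, hm.isPrime.radical]⟩

theorem idealOfVars_eq_ker_constantCoeff (σ R : Type*) [CommSemiring R] :
    idealOfVars σ R = RingHom.ker (constantCoeff (σ := σ) (R := R)) := by
  ext p
  rw [← pow_one (idealOfVars σ R), mem_pow_idealOfVars_iff', RingHom.mem_ker, constantCoeff_eq]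
  simp only [Nat.lt_one_iff, Finsupp.degree_eq_zero_iff, forall_eq]

theorem idealOfVars_isMaximal (σ K : Type*) [Field K] : (idealOfVars σ K).IsMaximal := by
  rw [idealOfVars_eq_ker_constantCoeff]
  exact RingHom.ker_isMaximal_of_surjective _ fun a => ⟨C a, constantCoeff_C σ a⟩

theorem depthZero_of_X_mul_mem {k : Type} [Field k] {σ : Type} {J : Ideal (MvPolynomial σ k)}
    {f : MvPolynomial σ k} (hf : f ∉ J) (hmul : ∀ i, X i * f ∈ J) : DepthZero k J := by
  have hle : maxIdeal k σ ≤ Submodule.colon J {f} := by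
    rw [maxIdeal, Ideal.span_le]
    rintro _ ⟨i, rfl⟩
    exact Submodule.mem_colon_singleton.2 (hmul i)
  exact mem_associatedPrimes_quotient_of_mul_mem (idealOfVars_isMaximal σ k) hf
    fun r hr => Submodule.mem_colon_singleton.1 (hle hr)

end Socle

theorem mul_mul_mem_pow_three {R : Type*} [CommSemiring R] {I : Ideal R} {p q r : R}
    (hp : p ∈ I) (hq : q ∈ I) (hr : r ∈ I) : p * q * r ∈ I ^ 3 := by
  rw [pow_succ, sq]
  exact Ideal.mul_mem_mul (Ideal.mul_mem_mul hp hq) hr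

section EdgeIdeal

variable {k : Type} [Field k] {σ : Type} {Γ : SimpleGraph σ}

theorem X_mul_X_mem_edgeIdeal {i j : σ} (h : Γ.Adj i j) :
    (X i * X j : MvPolynomial σ k) ∈ edgeIdeal k Γ :=
  Ideal.subset_span ⟨i, j, h, rfl⟩

theorem edgeIdeal_le_idealOfVars_sq : edgeIdeal k Γ ≤ idealOfVars σ k ^ 2 := by
  rw [edgeIdeal, Ideal.span_le]
  rintro _ ⟨i, j, _, rfl⟩
  rw [sq]
  exact Ideal.mul_mem_mul (Ideal.subset_span ⟨i, rfl⟩) (Ideal.subset_span ⟨j, rfl⟩)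

theorem notMem_edgeIdeal_pow_of_isHomogeneous {f : MvPolynomial σ k} {d t : ℕ}
    (hf : f.IsHomogeneous d) (hf0 : f ≠ 0) (hd : d < 2 * t) : f ∉ edgeIdeal k Γ ^ t := by
  intro hmem
  have hvars : f ∈ idealOfVars σ k ^ (2 * t) := by
    rw [pow_mul]
    exact Ideal.pow_right_mono edgeIdeal_le_idealOfVars_sq t hmem
  obtain ⟨a, ha⟩ := exists_coeff_ne_zero hf0
  have hdeg : a.degree = d := by
    by_contra hne
    exact ha (hf.coeff_eq_zero hne)
  exact ha ((mem_pow_idealOfVars_iff' _ _).1 hvars a (hdeg ▸ hd))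

theorem depthZero_edgeIdeal_cube_of_triangle {u v a b : σ}
    (hdom : ∀ w, Γ.Adj u w ∨ Γ.Adj v w) (hua : Γ.Adj u a) (hub : Γ.Adj u b) (hab : Γ.Adj a b) :
    DepthZero k (edgeIdeal k Γ ^ 3) := by
  let f : MvPolynomial σ k := X u * X u * X v * X a * X b
  have hdeg : f.IsHomogeneous 5 :=
    ((((isHomogeneous_X k u).mul (isHomogeneous_X k u)).mul (isHomogeneous_X k v)).mul
      (isHomogeneous_X k a)).mul (isHomogeneous_X k b)
  have hf0 : f ≠ 0 := by simp [f, X_ne_zero]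
  refine depthZero_of_X_mul_mem
    (notMem_edgeIdeal_pow_of_isHomogeneous hdeg hf0 (by norm_num)) fun w => ?_
  rcases hdom w with huw | hvw
  · have hfactor : X w * f = (X u * X w) * (X u * X v) * (X a * X b) := by ring
    rw [hfactor]
    exact mul_mul_mem_pow_three (X_mul_X_mem_edgeIdeal huw)
      (X_mul_X_mem_edgeIdeal (adj_of_forall_adj_or_adj hdom)) (X_mul_X_mem_edgeIdeal hab)
  · have hfactor : X w * f = (X v * X w) * (X u * X a) * (X u * X b) := by ring
    rw [hfactor]
    exact mul_mul_mem_pow_three (X_mul_X_mem_edgeIdeal hvw)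
      (X_mul_X_mem_edgeIdeal hua) (X_mul_X_mem_edgeIdeal hub)

end EdgeIdeal

theorem stmt17_general (k : Type) [Field k] {σ : Type} (Γ : SimpleGraph σ)
    (hnb : ¬ Γ.Colorable 2) (hdiam : ∃ u v : σ, 3 ≤ Γᶜ.edist u v) :
    DepthZero k (edgeIdeal k Γ ^ 3) := by
  obtain ⟨u, v, huv⟩ := hdiam
  have two_lt_edist : 2 < Γᶜ.edist u v := lt_of_lt_of_le (by norm_num) huv
  have hdom := two_lt_compl_edist_iff_forall_adj_or_adj.1 two_lt_edist
  rcases exists_triangle_of_not_colorable_two hdom hnb with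
    ⟨a, b, hua, hub, hab⟩ | ⟨a, b, hva, hvb, hab⟩
  · exact depthZero_edgeIdeal_cube_of_triangle hdom hua hub hab
  · exact depthZero_edgeIdeal_cube_of_triangle (fun w => (hdom w).symm) hva hvb hab

/-- Let `Γ` be a connected non-bipartite graph. If the complement
graph `Γᶜ` has two vertices at (possibly infinite) distance at least 3, then
`depth R/I^3 = 0`, i.e. the maximal graded ideal is an associated prime of `R/I^3`. -/
theorem stmt17 (k : Type) [Field k] (n : ℕ) (Γ : SimpleGraph (Fin n))
    (hiso : NoIsolated Γ) (hconn : Γ.Connected) (hnb : ¬ Γ.Colorable 2)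
    (hdiam : ∃ u v : Fin n, 3 ≤ (Γᶜ).edist u v) :
    DepthZero k ((edgeIdeal k Γ) ^ 3) :=
  stmt17_general k Γ hnb hdiam

end
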